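/- arXiv:1909.10109 — 8 statements merged into one kernel-verified Lean document; each statement's English description precedes it below -/
import Mathlib

section
/- For every integer n ≥ 1 and every permutation π of {1,…,n}, the number SP(n,π) of subset parking functions of size n with outcome π equals 2^{n(n−1)−inv(π)}, where inv(π) is the number of inversions of π. -/
/-!
Car `i` parks in spot `s = π⁻¹(i)` exactly when `C i` contains `s` and avoids every spot `j < s`
that is still free when car `i` arrives, i.e. every `j < s` with `π j > i`. The conditions on
different cars are independent, and the one on car `i` says that `C i` lies in the interval of
finsets between `{s}` and the complement of the forbidden spots. That interval has
`2 ^ (n - 1 - d i)` elements, where `d i` is the number of forbidden spots. The forbidden spots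
`j` of car `i` correspond to the inversions `(j, s)` of `π`, so the `d i` add up to `inv π`, and
multiplying over all cars gives the result.
-/

/-- `IsOutcome C π` says that the tuple of acceptable-spot sets `C = (C_0, …, C_{n-1})`
is a subset parking function whose outcome is the permutation `π`, where `π j = i`
means that car `i` parked in spot `j`.  Concretely, for every car `i`, the spot
`π.symm i` where it parks belongs to `C i`, and every earlier acceptable spot is
already occupied by an earlier car. -/
def IsOutcome {n : ℕ} (C : Fin n → Finset (Fin n)) (π : Equiv.Perm (Fin n)) : Prop :=
  ∀ i : Fin n, π.symm i ∈ C i ∧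
    ∀ j ∈ C i, j < π.symm i → ∃ i' : Fin n, i' < i ∧ π.symm i' = j

/-- The inversion number of a permutation: the number of pairs of positions `p₁ < p₂`
with `π p₂ < π p₁`. -/
def invNum {n : ℕ} (π : Equiv.Perm (Fin n)) : ℕ :=
  ((Finset.univ : Finset (Fin n × Fin n)).filter
    (fun p => p.1 < p.2 ∧ π p.2 < π p.1)).card

/-- The local inversion number `inv_i(π)`: the number of positions `j > i` with `π j < π i`. -/
def invLoc {n : ℕ} (π : Equiv.Perm (Fin n)) (i : Fin n) : ℕ :=
  (Finset.univ.filter (fun j : Fin n => i < j ∧ π j < π i)).card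

/-- `aStat π i` is the statistic `a_{i+1}(π)` of the paper (positions are 0-indexed here):
the largest `j` with `1 ≤ j ≤ i+1` such that `π i` is `≥` each of `π i, π (i-1), …, π (i-j+1)`.
It is computed as the number of `m ∈ {0, …, i}` such that all values at positions in
`[i - m, i]` are `≤ π i`. -/
def aStat {n : ℕ} (π : Equiv.Perm (Fin n)) (i : Fin n) : ℕ :=
  ((Finset.range ((i : ℕ) + 1)).filter
    (fun m => ∀ t : Fin n, (i : ℕ) - m ≤ (t : ℕ) → (t : ℕ) ≤ (i : ℕ) → π t ≤ π i)).card

/-- `bStat π i k` is the quantity `b_{i+1}(π, k)` of the paper (positions 0-indexed):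
`min{a_i(π), k}` if `i ≤ n - k` (1-indexed), `0` if `a_i(π) < k + i - n`, and
`min{n - i - k + a_i(π) + 1, n - i + 1}` otherwise. -/
def bStat {n : ℕ} (π : Equiv.Perm (Fin n)) (i : Fin n) (k : ℕ) : ℕ :=
  if (i : ℕ) + 1 + k ≤ n then min (aStat π i) k
  else if aStat π i + n < k + (i : ℕ) + 1 then 0
  else min (aStat π i + n - (i : ℕ) - k) (n - (i : ℕ))

/-- The ascent number of a permutation: the number of pairs of adjacent positions
`(p, p+1)` with `π p < π (p+1)`. -/
def ascNum {n : ℕ} (π : Equiv.Perm (Fin n)) : ℕ :=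
  ((Finset.univ : Finset (Fin n × Fin n)).filter
    (fun p => (p.1 : ℕ) + 1 = (p.2 : ℕ) ∧ π p.1 < π p.2)).card

/-- The Eulerian number `A(m, j)`: the number of permutations of `{1, …, m}` with
exactly `j` ascents. -/
noncomputable def eulerian (m j : ℕ) : ℕ :=
  Nat.card {σ : Equiv.Perm (Fin m) // ascNum σ = j}

/-- The spots that car `i` must not list if the outcome is to be `π`: those before its own spot
`π.symm i` that end up taken by a later car. -/
def forbiddenSpots {n : ℕ} (π : Equiv.Perm (Fin n)) (i : Fin n) : Finset (Fin n) :=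
  Finset.univ.filter (fun j => j < π.symm i ∧ i < π j)

lemma isOutcome_iff_mem_Icc {n : ℕ} (C : Fin n → Finset (Fin n)) (π : Equiv.Perm (Fin n)) :
    IsOutcome C π ↔ ∀ i, C i ∈ Finset.Icc {π.symm i} (forbiddenSpots π i)ᶜ := by
  unfold IsOutcome
  refine forall_congr' fun i => ?_
  rw [Finset.mem_Icc, Finset.singleton_subset_iff]
  refine and_congr_right fun _ => ?_
  simp only [Finset.subset_iff, forbiddenSpots, Finset.mem_compl, Finset.mem_filter,
    Finset.mem_univ, true_and, not_and, not_lt]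
  refine forall_congr' fun j => forall_congr' fun _ => forall_congr' fun hlt => ?_
  constructor
  · rintro ⟨i', hi', rfl⟩
    simpa using hi'.le
  · intro h
    refine ⟨π j, lt_of_le_of_ne h ?_, by simp⟩
    rintro rfl
    simp at hlt

/-- Grouping the inversions `(p₁, p₂)` of `π` by the car `π p₂` in the second position. -/
lemma sum_card_forbiddenSpots {n : ℕ} (π : Equiv.Perm (Fin n)) :
    ∑ i, (forbiddenSpots π i).card = invNum π := by
  rw [← Equiv.sum_comp π]
  simp only [invNum, forbiddenSpots, Finset.card_filter, Equiv.symm_apply_apply]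
  rw [Fintype.sum_prod_type_right]

theorem subset_parking_outcome_count (n : ℕ) (hn : 1 ≤ n) (π : Equiv.Perm (Fin n)) :
    Nat.card {C : Fin n → Finset (Fin n) // IsOutcome C π} =
      2 ^ (n * (n - 1) - invNum π) := by
  have hsub (i : Fin n) : {π.symm i} ⊆ (forbiddenSpots π i)ᶜ := by
    simp [forbiddenSpots]
  have hcard (i : Fin n) :
      ((forbiddenSpots π i)ᶜ.card - 1) + (forbiddenSpots π i).card = n - 1 := by
    have h1 := Finset.card_le_card (hsub i)
    have h2 := Finset.card_compl_add_card (forbiddenSpots π i)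
    rw [Finset.card_singleton] at h1
    rw [Fintype.card_fin] at h2
    omega
  have hsum : ∑ i, ((forbiddenSpots π i)ᶜ.card - 1) + invNum π = n * (n - 1) := by
    rw [← sum_card_forbiddenSpots, ← Finset.sum_add_distrib]
    simp [hcard]
  have hmem (C : Fin n → Finset (Fin n)) : IsOutcome C π ↔
      C ∈ Fintype.piFinset fun i => Finset.Icc {π.symm i} (forbiddenSpots π i)ᶜ := by
    rw [isOutcome_iff_mem_Icc, Fintype.mem_piFinset]
  rw [Nat.card_congr (Equiv.subtypeEquivRight hmem), Nat.card_eq_fintype_card,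
    Fintype.card_coe, Fintype.card_piFinset]
  simp only [Finset.card_Icc_finset (hsub _), Finset.card_singleton]
  rw [Finset.prod_pow_eq_pow_sum, ← hsum, Nat.add_sub_cancel]
end

section
/- For every integer n ≥ 1 and every permutation π of {1,…,n}, the number IPF(n,π) of interval parking functions of size n with outcome π equals n! times the product over i from 1 to n of a_i(π). -/
/-- The admissible left endpoints for the interval of the car that parks in spot `p`. -/
def leftEnds {n : ℕ} (π : Equiv.Perm (Fin n)) (p : Fin n) : Finset (Fin n) :=
  Finset.univ.filter (fun r => r ≤ p ∧ ∀ t, r ≤ t → t ≤ p → π t ≤ π p)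

/-- The admissible intervals for the car that parks in spot `p`. -/
def spotIntervals {n : ℕ} (π : Equiv.Perm (Fin n)) (p : Fin n) : Finset (Finset (Fin n)) :=
  (leftEnds π p ×ˢ Finset.Ici p).image (fun q => Finset.Icc q.1 q.2)

/-- The bijection sends a left endpoint `r` to its distance `p - r` from `p`. -/
lemma card_leftEnds {n : ℕ} (π : Equiv.Perm (Fin n)) (p : Fin n) :
    (leftEnds π p).card = aStat π p := by
  unfold aStat
  refine Finset.card_bij' (fun r _ => (p : ℕ) - (r : ℕ))
    (fun m _ => ⟨(p : ℕ) - m, by omega⟩) ?_ ?_ ?_ ?_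
  · intro r hr
    simp only [leftEnds, Finset.mem_filter, Finset.mem_univ, true_and, Finset.mem_range] at hr ⊢
    refine ⟨by omega, fun t h1 h2 => hr.2 t ?_ h2⟩
    have := hr.1
    rw [Fin.le_def] at *
    omega
  · intro m hm
    simp only [leftEnds, Finset.mem_filter, Finset.mem_univ, true_and, Finset.mem_range] at hm ⊢
    exact ⟨by rw [Fin.le_def]; simp, fun t h1 h2 => hm.2 t h1 h2⟩
  · intro r hr
    simp only [leftEnds, Finset.mem_filter, Finset.mem_univ, true_and] at hr
    have := hr.1
    rw [Fin.le_def] at this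
    ext
    simp only
    omega
  · intro m hm
    simp only [Finset.mem_filter, Finset.mem_range] at hm
    simp only
    omega

lemma card_spotIntervals {n : ℕ} (π : Equiv.Perm (Fin n)) (p : Fin n) :
    (spotIntervals π p).card = (n - p) * aStat π p := by
  unfold spotIntervals
  rw [Finset.card_image_of_injOn, Finset.card_product, card_leftEnds, Fin.card_Ici, mul_comm]
  rintro ⟨r, s⟩ h ⟨r', s'⟩ h' heq
  simp only [Finset.coe_product, Set.mem_prod, Finset.mem_coe, leftEnds, Finset.mem_filter,
    Finset.mem_univ, true_and, Finset.mem_Ici] at h h'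
  -- Both intervals contain `p`, hence are nonempty and determine their endpoints.
  have hrs : r ≤ s := h.1.1.trans h.2
  have hrs' : r' ≤ s' := h'.1.1.trans h'.2
  have hset : Set.Icc r s = Set.Icc r' s' := by
    simpa using congrArg (fun F : Finset (Fin n) => (F : Set (Fin n))) heq
  obtain ⟨h1, h2⟩ := (Set.Icc_eq_Icc_iff hrs).1 hset
  rw [h1, h2]

lemma mem_spotIntervals {n : ℕ} (π : Equiv.Perm (Fin n)) (i : Fin n) (D : Finset (Fin n)) :
    D ∈ spotIntervals π (π.symm i) ↔
      (∃ r s : Fin n, r ≤ s ∧ D = Finset.Icc r s) ∧ π.symm i ∈ D ∧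
        ∀ j ∈ D, j < π.symm i → ∃ i' : Fin n, i' < i ∧ π.symm i' = j := by
  simp only [spotIntervals, leftEnds, Finset.mem_image, Finset.mem_product, Finset.mem_filter,
    Finset.mem_univ, true_and, Finset.mem_Ici, Prod.exists, Equiv.apply_symm_apply]
  constructor
  · rintro ⟨r, s, ⟨⟨hr, ht⟩, hs⟩, rfl⟩
    refine ⟨⟨r, s, hr.trans hs, rfl⟩, Finset.mem_Icc.2 ⟨hr, hs⟩, fun j hj hlt => ?_⟩
    refine ⟨π j, lt_of_le_of_ne (ht j (Finset.mem_Icc.1 hj).1 hlt.le) ?_, by simp⟩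
    rintro rfl
    simp at hlt
  · rintro ⟨⟨r, s, -, rfl⟩, hmem, hall⟩
    obtain ⟨hr, hs⟩ := Finset.mem_Icc.1 hmem
    refine ⟨r, s, ⟨⟨hr, fun t h1 h2 => ?_⟩, hs⟩, rfl⟩
    rcases h2.lt_or_eq with h | rfl
    · obtain ⟨i', hi', rfl⟩ := hall t (Finset.mem_Icc.2 ⟨h1, h2.trans hs⟩) h
      simpa using hi'.le
    · simp

lemma prod_sub_eq_factorial (n : ℕ) : ∏ p : Fin n, (n - (p : ℕ)) = n.factorial := by
  rw [Fin.prod_univ_eq_prod_range (fun k => n - k) n, ← Nat.descFactorial_eq_prod_range,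
    Nat.descFactorial_self]

theorem interval_parking_outcome_count (n : ℕ) (hn : 1 ≤ n) (π : Equiv.Perm (Fin n)) :
    Nat.card {C : Fin n → Finset (Fin n) //
        (∀ i, ∃ r s : Fin n, r ≤ s ∧ C i = Finset.Icc r s) ∧ IsOutcome C π} =
      Nat.factorial n * ∏ i : Fin n, aStat π i := by
  have hiff : ∀ C : Fin n → Finset (Fin n),
      ((∀ i, ∃ r s : Fin n, r ≤ s ∧ C i = Finset.Icc r s) ∧ IsOutcome C π) ↔
        C ∈ Fintype.piFinset (fun i => spotIntervals π (π.symm i)) := by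
    intro C
    simp only [Fintype.mem_piFinset, mem_spotIntervals, IsOutcome]
    exact forall_and.symm
  rw [Nat.card_congr (Equiv.subtypeEquivRight hiff), Nat.card_eq_fintype_card, Fintype.card_coe,
    Fintype.card_piFinset, Equiv.prod_comp π.symm (fun p => (spotIntervals π p).card)]
  simp only [card_spotIntervals]
  rw [Finset.prod_mul_distrib, prod_sub_eq_factorial]
end

section
/- For every integer n ≥ 1, the total number IPF(n) of interval parking functions of size n equals n! · (n+1)^{n−1}. -/
/-- `Circ f q`: when `n` cars with preferred spots `f` park on a circle with `n + 1` spots, each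
moving upwards (cyclically) from its preferred spot to the first free one, car `i` ends up in spot
`q i`. The cyclic distance from `f i` to `x` is `x - f i`. -/
def Circ {n : ℕ} (f q : Fin n → Fin (n + 1)) : Prop :=
  ∀ i, (∀ i' < i, q i' ≠ q i) ∧ ∀ x, x - f i < q i - f i → ∃ i' < i, q i' = x

theorem Circ.injective {n : ℕ} {f q : Fin n → Fin (n + 1)} (h : Circ f q) :
    Function.Injective q := by
  intro a b hab
  rcases lt_trichotomy a b with hlt | heq | hgt
  · exact absurd hab ((h b).1 a hlt)
  · exact heq
  · exact absurd hab.symm ((h a).1 b hgt)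

theorem Circ.unique {n : ℕ} {f q q' : Fin n → Fin (n + 1)} (h : Circ f q) (h' : Circ f q') :
    q = q' := by
  funext i
  induction i using WellFoundedLT.induction with
  | ind i ih =>
    rcases lt_trichotomy (q i - f i) (q' i - f i) with hlt | heq | hgt
    · obtain ⟨j, hj, hjq⟩ := (h' i).2 _ hlt
      exact absurd ((ih j hj).trans hjq) ((h i).1 j hj)
    · exact sub_left_injective heq
    · obtain ⟨j, hj, hjq⟩ := (h i).2 _ hgt
      exact absurd ((ih j hj).symm.trans hjq) ((h' i).1 j hj)

theorem Circ.exists_outcome {n : ℕ} (f : Fin n → Fin (n + 1)) : ∃ q, Circ f q := by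
  -- The cars `0, …, k - 1` are parked one after the other.
  have key : ∀ k : ℕ, ∃ q : Fin n → Fin (n + 1), ∀ i : Fin n, (i : ℕ) < k →
      (∀ i' < i, q i' ≠ q i) ∧ ∀ x, x - f i < q i - f i → ∃ i' < i, q i' = x := by
    intro k
    induction k with
    | zero => exact ⟨f, fun i hi => absurd hi (Nat.not_lt_zero _)⟩
    | succ k ih =>
      obtain ⟨q, hq⟩ := ih
      by_cases hk : k < n
      · have hne : (Finset.univ \ Finset.univ.image q).Nonempty := by
          rw [← Finset.card_pos]
          have h1 := Finset.le_card_sdiff (Finset.univ.image q) (Finset.univ : Finset (Fin (n+1)))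
          have h2 : (Finset.univ.image q).card ≤ n := by
            simpa using Finset.card_image_le (s := Finset.univ) (f := q)
          simp only [Finset.card_univ, Fintype.card_fin] at h1
          omega
        have hne' : (Finset.univ.filter
            (fun x => ∀ i' < (⟨k, hk⟩ : Fin n), q i' ≠ x)).Nonempty := by
          obtain ⟨x, hx⟩ := hne
          refine ⟨x, ?_⟩
          simp only [Finset.mem_sdiff, Finset.mem_univ, true_and, Finset.mem_image,
            not_exists] at hx
          simp only [Finset.mem_filter, Finset.mem_univ, true_and]
          exact fun i' _ => hx i'
        obtain ⟨y, hy, hmin⟩ := Finset.exists_min_image _ (fun x => x - f ⟨k, hk⟩) hne'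
        simp only [Finset.mem_filter, Finset.mem_univ, true_and] at hy hmin
        refine ⟨Function.update q ⟨k, hk⟩ y, ?_⟩
        have hold : ∀ i' : Fin n, (i' : ℕ) < k → Function.update q ⟨k, hk⟩ y i' = q i' := by
          intro i' hi'
          apply Function.update_of_ne
          rintro rfl
          exact lt_irrefl _ hi'
        intro i hi
        rcases Nat.lt_succ_iff_lt_or_eq.mp hi with hlt | heq
        · rw [hold i hlt]
          refine ⟨fun i' hi' => ?_, fun x hx => ?_⟩
          · rw [hold i' (lt_trans hi' hlt)]
            exact (hq i hlt).1 i' hi'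
          · obtain ⟨i', hi', he⟩ := (hq i hlt).2 x hx
            exact ⟨i', hi', by rw [hold i' (lt_trans hi' hlt), he]⟩
        · obtain rfl : i = ⟨k, hk⟩ := Fin.ext heq
          rw [Function.update_self]
          refine ⟨fun i' hi' => ?_, fun x hx => ?_⟩
          · rw [hold i' hi']
            exact hy i' hi'
          · by_contra hcon
            push Not at hcon
            refine absurd hx (not_lt.mpr (hmin x fun i' hi' => ?_))
            rw [← hold i' hi']
            exact hcon i' hi'
      · exact ⟨q, fun i hi => hq i (by omega)⟩
  obtain ⟨q, hq⟩ := key n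
  exact ⟨q, fun i => hq i i.2⟩

theorem Circ.add_const {n : ℕ} {f q : Fin n → Fin (n + 1)} (h : Circ f q) (c : Fin (n + 1)) :
    Circ (fun i => f i + c) (fun i => q i + c) := by
  intro i
  refine ⟨fun i' hi' he => (h i).1 i' hi' (add_right_cancel he), fun x hx => ?_⟩
  obtain ⟨i', hi', he⟩ := (h i).2 (x - c) (by
    rw [add_sub_add_right_eq_sub] at hx
    rwa [show x - c - f i = x - (f i + c) by abel])
  exact ⟨i', hi', by simp [he]⟩

/-- Circular parking processes (preferences and outcome) that leave spot `c` empty. -/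
abbrev Missing (n : ℕ) (c : Fin (n + 1)) : Type :=
  {p : (Fin n → Fin (n + 1)) × (Fin n → Fin (n + 1)) // Circ p.1 p.2 ∧ ∀ i, p.2 i ≠ c}

theorem card_missing_le {n : ℕ} (c d : Fin (n + 1)) :
    Nat.card (Missing n c) ≤ Nat.card (Missing n d) := by
  let g : Missing n c → Missing n d := fun p =>
    ⟨(fun i => p.1.1 i + (d - c), fun i => p.1.2 i + (d - c)), p.2.1.add_const _, fun i he =>
      p.2.2 i (by
        have he' : p.1.2 i + (d - c) = d := he
        rw [← eq_sub_iff_add_eq] at he'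
        simpa using he')⟩
  apply Nat.card_le_card_of_injective g
  rintro ⟨⟨f, q⟩, h⟩ ⟨⟨f', q'⟩, h'⟩ he
  simp only [g, Subtype.mk.injEq, Prod.mk.injEq] at he
  have h1 : f = f' := funext fun i => add_right_cancel (congrFun he.1 i)
  have h2 : q = q' := funext fun i => add_right_cancel (congrFun he.2 i)
  subst h1 h2
  rfl

theorem card_sigma_missing (n : ℕ) :
    Nat.card (Σ c : Fin (n + 1), Missing n c) = (n + 1) ^ n := by
  have hb : Function.Bijective
      (fun p : (Σ c : Fin (n + 1), Missing n c) => p.2.1.1) := by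
    constructor
    · rintro ⟨c, ⟨f, q⟩, h, hc⟩ ⟨c', ⟨f', q'⟩, h', hc'⟩ he
      obtain rfl : f = f' := he
      obtain rfl : q = q' := h.unique h'
      have hcc : c = c' := by
        by_contra hne
        -- An injective `q` cannot miss two of the `n + 1` spots.
        have h1 : (Finset.univ.image q) ⊆ Finset.univ \ {c, c'} := by
          intro x hx
          simp only [Finset.mem_image, Finset.mem_univ, true_and] at hx
          obtain ⟨i, rfl⟩ := hx
          simpa using ⟨hc i, hc' i⟩
        have h2 := Finset.card_le_card h1
        rw [Finset.card_image_of_injective _ h.injective,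
          Finset.card_sdiff_of_subset (Finset.subset_univ _), Finset.card_pair hne] at h2
        simp only [Finset.card_univ, Fintype.card_fin] at h2
        have hn : n ≠ 0 := by
          rintro rfl
          exact hne (Subsingleton.elim (α := Fin 1) _ _)
        omega
      subst hcc
      rfl
    · intro f
      obtain ⟨q, hq⟩ := Circ.exists_outcome f
      have : ¬ Function.Surjective q := by
        intro hs
        have := Fintype.card_le_of_surjective q hs
        simp at this
      simp only [Function.Surjective, not_forall, not_exists] at this
      obtain ⟨c, hc⟩ := this
      exact ⟨⟨c, ⟨(f, q), hq, hc⟩⟩, rfl⟩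
  rw [Nat.card_eq_of_bijective _ hb]
  simp

theorem card_missing {n : ℕ} (hn : 1 ≤ n) (c : Fin (n + 1)) :
    Nat.card (Missing n c) = (n + 1) ^ (n - 1) := by
  have h := card_sigma_missing n
  rw [Nat.card_sigma, Finset.sum_congr rfl
    (fun d _ => le_antisymm (card_missing_le d c) (card_missing_le c d))] at h
  simp only [Finset.sum_const, Finset.card_univ, Fintype.card_fin, smul_eq_mul] at h
  obtain ⟨m, rfl⟩ : ∃ m, n = m + 1 := ⟨n - 1, by omega⟩
  rw [pow_succ, mul_comm] at h
  exact Nat.eq_of_mul_eq_mul_right (by omega) h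

/-- `Lin r π`: in the classical parking process on a line, with preferred spots `r`, the outcome
is `π` (car `π j` parks in spot `j`). -/
def Lin {n : ℕ} (r : Fin n → Fin n) (π : Equiv.Perm (Fin n)) : Prop :=
  ∀ i, r i ≤ π.symm i ∧ ∀ j, r i ≤ j → j < π.symm i → ∃ i' < i, π.symm i' = j

/-- Cyclic distances compare like positions when there is no wraparound. -/
theorem sub_lt_sub_iff_of_le {m : ℕ} {a b x : Fin (m + 1)} (hab : a ≤ b) :
    x - a < b - a ↔ a ≤ x ∧ x < b := by
  rw [Fin.lt_def, Fin.sub_val_of_le hab, Fin.lt_def, Fin.le_def]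
  rw [Fin.le_def] at hab
  by_cases hx : a ≤ x
  · rw [Fin.sub_val_of_le hx]
    rw [Fin.le_def] at hx
    omega
  · rw [Fin.coe_sub_iff_lt.mpr (not_le.mp hx)]
    rw [Fin.le_def] at hx
    omega

/-- A car whose process leaves the last spot empty never passes through that spot, hence never
wraps around. -/
theorem Circ.le_of_missing_last {n : ℕ} {f q : Fin n → Fin (n + 1)} (h : Circ f q)
    (hl : ∀ i, q i ≠ Fin.last n) (i : Fin n) : f i ≤ q i := by
  by_contra hlt
  rw [not_le] at hlt
  obtain ⟨i', -, he⟩ := (h i).2 (Fin.last n) (by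
    rw [Fin.lt_def, Fin.sub_val_of_le (Fin.le_last _), Fin.coe_sub_iff_lt.mpr hlt]
    have h1 : (q i : ℕ) ≠ n := fun hh => hl i (Fin.ext (by simpa using hh))
    have h2 := (q i).2
    have h3 := (f i).2
    rw [Fin.val_last]
    omega)
  exact hl i' he

theorem circ_castSucc_iff {n : ℕ} (r : Fin n → Fin n) (π : Equiv.Perm (Fin n)) :
    Circ (fun i => (r i).castSucc) (fun i => (π.symm i).castSucc) ↔ Lin r π := by
  constructor
  · intro h i
    have hle := h.le_of_missing_last (fun i => (Fin.castSucc_lt_last _).ne) i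
    refine ⟨Fin.castSucc_le_castSucc_iff.mp hle, fun j hj hj' => ?_⟩
    obtain ⟨i', hi', he⟩ := (h i).2 j.castSucc ((sub_lt_sub_iff_of_le hle).mpr
      ⟨Fin.castSucc_le_castSucc_iff.mpr hj, Fin.castSucc_lt_castSucc_iff.mpr hj'⟩)
    exact ⟨i', hi', Fin.castSucc_injective _ he⟩
  · intro h i
    refine ⟨fun i' hi' he => hi'.ne (π.symm.injective (Fin.castSucc_injective _ he)),
      fun x hx => ?_⟩
    obtain ⟨h1, h2⟩ := (sub_lt_sub_iff_of_le
      (Fin.castSucc_le_castSucc_iff.mpr (h i).1)).mp hx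
    have hxl : x ≠ Fin.last n := (h2.trans (Fin.castSucc_lt_last _)).ne
    obtain ⟨y, rfl⟩ := Fin.exists_castSucc_eq.mpr hxl
    obtain ⟨i', hi', he⟩ := (h i).2 y (Fin.castSucc_le_castSucc_iff.mp h1)
      (Fin.castSucc_lt_castSucc_iff.mp h2)
    exact ⟨i', hi', congrArg Fin.castSucc he⟩

theorem card_lin {n : ℕ} (hn : 1 ≤ n) :
    Nat.card {p : (Fin n → Fin n) × Equiv.Perm (Fin n) // Lin p.1 p.2} = (n + 1) ^ (n - 1) := by
  rw [← card_missing hn (Fin.last n)]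
  let g : {p : (Fin n → Fin n) × Equiv.Perm (Fin n) // Lin p.1 p.2} → Missing n (Fin.last n) :=
    fun p => ⟨(fun i => (p.1.1 i).castSucc, fun i => (p.1.2.symm i).castSucc),
      (circ_castSucc_iff _ _).mpr p.2, fun i => (Fin.castSucc_lt_last _).ne⟩
  apply Nat.card_eq_of_bijective g
  constructor
  · rintro ⟨⟨r, π⟩, h⟩ ⟨⟨r', π'⟩, h'⟩ he
    simp only [g, Subtype.mk.injEq, Prod.mk.injEq] at he
    obtain rfl : r = r' := funext fun i => Fin.castSucc_injective _ (congrFun he.1 i)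
    have h2 : π.symm = π'.symm :=
      Equiv.ext fun i => Fin.castSucc_injective _ (congrFun he.2 i)
    obtain rfl : π = π' := by rw [← π.symm_symm, h2, π'.symm_symm]
    rfl
  · rintro ⟨⟨f, q⟩, h, hl⟩
    have hfl : ∀ i, f i ≠ Fin.last n := fun i he =>
      hl i (Fin.last_le_iff.mp (he ▸ h.le_of_missing_last hl i))
    choose r hr using fun i => Fin.exists_castSucc_eq.mpr (hfl i)
    choose o ho using fun i => Fin.exists_castSucc_eq.mpr (hl i)
    obtain rfl : (fun i => (r i).castSucc) = f := funext hr
    obtain rfl : (fun i => (o i).castSucc) = q := funext ho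
    have hinj : Function.Injective o := fun a b hab => h.injective (by simp [hab])
    let e : Equiv.Perm (Fin n) := Equiv.ofBijective o (Finite.injective_iff_bijective.mp hinj)
    exact ⟨⟨(r, e.symm), (circ_castSucc_iff r e.symm).mp h⟩, rfl⟩

theorem card_right_endpoints {n : ℕ} (π : Equiv.Perm (Fin n)) :
    Nat.card {s : Fin n → Fin n // ∀ i, π.symm i ≤ s i} = n.factorial := by
  rw [Nat.card_congr (Equiv.subtypePiEquivPi (p := fun i x => π.symm i ≤ x)), Nat.card_pi]
  rw [Equiv.prod_comp π.symm (fun j => Nat.card {x : Fin n // j ≤ x})]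
  have h1 : ∀ j : Fin n, Nat.card {x : Fin n // j ≤ x} = n - j := by
    intro j
    rw [Nat.card_eq_fintype_card, Fintype.card_subtype, ← Fin.card_Ici j]
    congr 1
    ext x
    simp
  simp only [h1]
  rw [Fin.prod_univ_eq_prod_range (fun j => n - j) n, ← Finset.prod_range_add_one_eq_factorial,
    ← Finset.prod_range_reflect]
  refine Finset.prod_congr rfl fun j hj => ?_
  have := Finset.mem_range.mp hj
  omega

theorem IsOutcome.unique {n : ℕ} {C : Fin n → Finset (Fin n)} {π π' : Equiv.Perm (Fin n)}
    (h : IsOutcome C π) (h' : IsOutcome C π') : π = π' := by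
  have key : ∀ i, π.symm i = π'.symm i := by
    intro i
    induction i using WellFoundedLT.induction with
    | ind i ih =>
      rcases lt_trichotomy (π.symm i) (π'.symm i) with hlt | heq | hgt
      · obtain ⟨j, hj, hjq⟩ := (h' i).2 _ (h i).1 hlt
        exact absurd (π.symm.injective ((ih j hj).trans hjq)) hj.ne
      · exact heq
      · obtain ⟨j, hj, hjq⟩ := (h i).2 _ (h' i).1 hgt
        exact absurd (π'.symm.injective ((ih j hj).symm.trans hjq)) hj.ne
  rw [← π.symm_symm, Equiv.ext key, π'.symm_symm]

theorem isOutcome_Icc_iff {n : ℕ} (r s : Fin n → Fin n) (π : Equiv.Perm (Fin n)) :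
    IsOutcome (fun i => Finset.Icc (r i) (s i)) π ↔ Lin r π ∧ ∀ i, π.symm i ≤ s i := by
  simp only [IsOutcome, Lin, Finset.mem_Icc]
  constructor
  · intro h
    exact ⟨fun i => ⟨(h i).1.1, fun j hj hj' => (h i).2 j ⟨hj, hj'.le.trans (h i).1.2⟩ hj'⟩,
      fun i => (h i).1.2⟩
  · rintro ⟨h, hs⟩ i
    exact ⟨⟨(h i).1, hs i⟩, fun j hj hj' => (h i).2 j hj.1 hj'⟩

theorem interval_parking_count (n : ℕ) (hn : 1 ≤ n) :
    Nat.card {C : Fin n → Finset (Fin n) //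
        (∀ i, ∃ r s : Fin n, r ≤ s ∧ C i = Finset.Icc r s) ∧
          ∃ π : Equiv.Perm (Fin n), IsOutcome C π} =
      Nat.factorial n * (n + 1) ^ (n - 1) := by
  let g : (Σ p : {p : (Fin n → Fin n) × Equiv.Perm (Fin n) // Lin p.1 p.2},
        {s : Fin n → Fin n // ∀ i, p.1.2.symm i ≤ s i}) →
      {C : Fin n → Finset (Fin n) //
        (∀ i, ∃ r s : Fin n, r ≤ s ∧ C i = Finset.Icc r s) ∧
          ∃ π : Equiv.Perm (Fin n), IsOutcome C π} :=
    fun t => ⟨fun i => Finset.Icc (t.1.1.1 i) (t.2.1 i),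
      fun i => ⟨_, _, (t.1.2 i).1.trans (t.2.2 i), rfl⟩,
      t.1.1.2, (isOutcome_Icc_iff _ _ _).mpr ⟨t.1.2, t.2.2⟩⟩
  have hg : Function.Bijective g := by
    constructor
    · rintro ⟨⟨⟨r, π⟩, h⟩, s, hs⟩ ⟨⟨⟨r', π'⟩, h'⟩, s', hs'⟩ he
      have he' : (fun i => Finset.Icc (r i) (s i)) = fun i => Finset.Icc (r' i) (s' i) :=
        congrArg Subtype.val he
      have hi : ∀ i, r i = r' i ∧ s i = s' i := by
        intro i
        have h1 : Finset.Icc (r i) (s i) = Finset.Icc (r' i) (s' i) := congrFun he' i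
        have hrs : r i ≤ s i := (h i).1.trans (hs i)
        have hrs' : r' i ≤ s' i := (h' i).1.trans (hs' i)
        have a := (Finset.Icc_subset_Icc_iff hrs).mp h1.subset
        have b := (Finset.Icc_subset_Icc_iff hrs').mp h1.symm.subset
        exact ⟨le_antisymm b.1 a.1, le_antisymm a.2 b.2⟩
      obtain rfl : r = r' := funext fun i => (hi i).1
      obtain rfl : s = s' := funext fun i => (hi i).2
      obtain rfl : π = π' := ((isOutcome_Icc_iff r s π).mpr ⟨h, hs⟩).unique
        ((isOutcome_Icc_iff r s π').mpr ⟨h', hs'⟩)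
      rfl
    · rintro ⟨C, hC, π, hπ⟩
      choose r s hrs hCe using id hC
      obtain rfl : C = fun i => Finset.Icc (r i) (s i) := funext hCe
      obtain ⟨h1, h2⟩ := (isOutcome_Icc_iff r s π).mp hπ
      exact ⟨⟨⟨(r, π), h1⟩, s, h2⟩, rfl⟩
  classical
  let _ := Fintype.ofFinite {p : (Fin n → Fin n) × Equiv.Perm (Fin n) // Lin p.1 p.2}
  rw [← Nat.card_eq_of_bijective g hg, Nat.card_sigma,
    Finset.sum_congr rfl (fun p _ => card_right_endpoints p.1.2)]
  rw [Finset.sum_const, Finset.card_univ, ← Nat.card_eq_fintype_card, card_lin hn, smul_eq_mul,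
    mul_comm]
end

section
/- Let 1 ≤ k ≤ n and let π be a permutation of {1,…,n}. If π does not satisfy π_n > π_{n−1} > ⋯ > π_{n−k+1}, then the number IPF_k(n,π) of k-interval parking functions with outcome π is 0. Otherwise, IPF_k(n,π) equals the product over i from 1 to n−k of min{a_i(π), k}, times the product over i from n−k+1 to n of min{n − i − k + a_i(π) + 1, n − i + 1}. -/
/-- `S` is an interval of `k` spots that the car parked in spot `p` may have under outcome `π`. -/
def Admissible {n : ℕ} (k : ℕ) (π : Equiv.Perm (Fin n)) (p : Fin n) (S : Finset (Fin n)) : Prop :=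
  ((∃ r s : Fin n, S = Finset.Icc r s) ∧ S.card = k) ∧ p ∈ S ∧ ∀ j ∈ S, j < p → π j < π p

theorem tuple_iff {n : ℕ} (k : ℕ) (π : Equiv.Perm (Fin n)) (C : Fin n → Finset (Fin n)) :
    ((∀ i, (∃ r s : Fin n, C i = Finset.Icc r s) ∧ (C i).card = k) ∧ IsOutcome C π) ↔
      ∀ i, Admissible k π (π.symm i) (C i) := by
  have key : ∀ i j : Fin n, (∃ i' : Fin n, i' < i ∧ π.symm i' = j) ↔ π j < π (π.symm i) := by
    intro i j
    constructor
    · rintro ⟨i', h, rfl⟩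
      simpa using h
    · intro h
      exact ⟨π j, by simpa using h, by simp⟩
  unfold IsOutcome Admissible
  simp only [key]
  exact forall_and.symm

theorem card_tuples_eq_prod {n : ℕ} (k : ℕ) (π : Equiv.Perm (Fin n)) :
    Nat.card {C : Fin n → Finset (Fin n) //
        (∀ i, (∃ r s : Fin n, C i = Finset.Icc r s) ∧ (C i).card = k) ∧ IsOutcome C π} =
      ∏ p : Fin n, Nat.card {S : Finset (Fin n) // Admissible k π p S} := by
  rw [Nat.card_congr (Equiv.subtypeEquivRight (tuple_iff k π)),
    Nat.card_congr (Equiv.subtypePiEquivPi (p := fun i S => Admissible k π (π.symm i) S)),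
    Nat.card_pi]
  exact Equiv.prod_comp π.symm (fun p => Nat.card {S : Finset (Fin n) // Admissible k π p S})

/-- A finite set of naturals closed under going down is an initial segment. -/
theorem mem_iff_lt_card (s : Finset ℕ) (h : ∀ a b, a ≤ b → b ∈ s → a ∈ s) (m : ℕ) :
    m ∈ s ↔ m < s.card := by
  constructor
  · intro hm
    have : Finset.range (m + 1) ⊆ s := fun x hx => h x m (by simp at hx; omega) hm
    simpa using Finset.card_le_card this
  · intro hlt
    by_contra hm
    have : s ⊆ Finset.range m := by
      intro x hx
      by_contra hxm
      exact hm (h m x (by simpa using hxm) hx)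
    have := Finset.card_le_card this
    simp at this
    omega

theorem lt_aStat_iff {n : ℕ} (π : Equiv.Perm (Fin n)) (p : Fin n) (m : ℕ) :
    m < aStat π p ↔ m ≤ (p : ℕ) ∧
      ∀ t : Fin n, (p : ℕ) - m ≤ (t : ℕ) → (t : ℕ) ≤ (p : ℕ) → π t ≤ π p := by
  unfold aStat
  rw [← mem_iff_lt_card]
  · simp
  · intro a b hab hb
    simp only [Finset.mem_filter, Finset.mem_range] at hb ⊢
    exact ⟨by omega, fun t h1 h2 => hb.2 t (by omega) h2⟩

theorem card_admissible {n k : ℕ} (hk1 : 1 ≤ k) (hkn : k ≤ n) (π : Equiv.Perm (Fin n))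
    (p : Fin n) :
    Nat.card {S : Finset (Fin n) // Admissible k π p S} =
      (Finset.Icc (max ((p : ℕ) + 1 - k) ((p : ℕ) + 1 - aStat π p))
        (min (p : ℕ) (n - k))).card := by
  classical
  have hpos : 0 < aStat π p := by
    rw [lt_aStat_iff]
    exact ⟨Nat.zero_le _, fun t h1 h2 => le_of_eq (congrArg π (Fin.ext (by omega)))⟩
  rw [Nat.card_eq_fintype_card, Fintype.card_subtype]
  symm
  have hr : ∀ r ∈ Finset.Icc (max ((p : ℕ) + 1 - k) ((p : ℕ) + 1 - aStat π p))
      (min (p : ℕ) (n - k)), r + k ≤ n ∧ r ≤ p ∧ (p : ℕ) < r + k ∧ (p : ℕ) - r < aStat π p := by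
    intro r hr
    simp only [Finset.mem_Icc] at hr
    omega
  refine Finset.card_bij (fun r h => Finset.Icc (⟨r, by have := hr r h; omega⟩ : Fin n)
    ⟨r + k - 1, by have := hr r h; omega⟩) ?_ ?_ ?_
  · intro r h
    obtain ⟨h1, h2, h3, h4⟩ := hr r h
    simp only [Finset.mem_filter, Finset.mem_univ, true_and]
    refine ⟨⟨⟨_, _, rfl⟩, ?_⟩, ?_, ?_⟩
    · simp only [Fin.card_Icc]
      omega
    · simp only [Finset.mem_Icc, Fin.le_def]
      omega
    · intro j hj hjp
      simp only [Finset.mem_Icc, Fin.le_def] at hj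
      have := ((lt_aStat_iff π p _).1 h4).2 j (by omega) (le_of_lt hjp)
      exact lt_of_le_of_ne this (fun e => (ne_of_lt hjp) (π.injective e))
  · intro r h r' h' e
    obtain ⟨h1, h2, h3, h4⟩ := hr r h
    obtain ⟨h1', h2', h3', h4'⟩ := hr r' h'
    have m1 : (⟨r, by omega⟩ : Fin n) ∈ Finset.Icc (⟨r', by omega⟩ : Fin n)
        ⟨r' + k - 1, by omega⟩ := by
      rw [← e]
      simp only [Finset.mem_Icc, Fin.le_def]
      omega
    have m2 : (⟨r', by omega⟩ : Fin n) ∈ Finset.Icc (⟨r, by omega⟩ : Fin n)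
        ⟨r + k - 1, by omega⟩ := by
      rw [e]
      simp only [Finset.mem_Icc, Fin.le_def]
      omega
    simp only [Finset.mem_Icc, Fin.le_def] at m1 m2
    omega
  · intro S hS
    simp only [Finset.mem_filter, Finset.mem_univ, true_and] at hS
    obtain ⟨⟨⟨r, s, rfl⟩, hc⟩, hp, hj⟩ := hS
    simp only [Fin.card_Icc] at hc
    simp only [Finset.mem_Icc, Fin.le_def] at hp
    have hs := s.isLt
    have ha : (p : ℕ) - r < aStat π p := by
      rw [lt_aStat_iff]
      refine ⟨by omega, fun t h1 h2 => ?_⟩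
      rcases lt_or_eq_of_le h2 with h | h
      · exact le_of_lt (hj t (by simp only [Finset.mem_Icc, Fin.le_def]; omega) h)
      · exact le_of_eq (congrArg π (Fin.ext h))
    refine ⟨r, by simp only [Finset.mem_Icc]; omega, ?_⟩
    congr 1
    exact Fin.ext (by simp only; omega)

theorem k_interval_parking_outcome_count (n k : ℕ) (hk1 : 1 ≤ k) (hkn : k ≤ n)
    (π : Equiv.Perm (Fin n)) :
    (¬ (∀ i j : Fin n, n ≤ (i : ℕ) + k → i < j → π i < π j) →
      Nat.card {C : Fin n → Finset (Fin n) //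
        (∀ i, (∃ r s : Fin n, C i = Finset.Icc r s) ∧ (C i).card = k) ∧ IsOutcome C π} = 0) ∧
    ((∀ i j : Fin n, n ≤ (i : ℕ) + k → i < j → π i < π j) →
      (Nat.card {C : Fin n → Finset (Fin n) //
        (∀ i, (∃ r s : Fin n, C i = Finset.Icc r s) ∧ (C i).card = k) ∧ IsOutcome C π} : ℤ) =
        ∏ i : Fin n,
          if (i : ℕ) + 1 + k ≤ n then (min (aStat π i) k : ℤ)
          else min ((n : ℤ) - ((i : ℕ) + 1) - (k : ℤ) + (aStat π i : ℤ) + 1)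
                   ((n : ℤ) - ((i : ℕ) + 1) + 1)) := by
  refine ⟨fun hdesc => ?_, fun hinc => ?_⟩
  · rw [Nat.card_eq_zero]
    left
    constructor
    rintro ⟨C, hC⟩
    rw [tuple_iff] at hC
    apply hdesc
    intro i j hi hij
    obtain ⟨⟨⟨r, s, hrs⟩, hc⟩, hmem, hlt⟩ := hC (π j)
    simp only [Equiv.symm_apply_apply] at hmem hlt
    refine hlt i ?_ hij
    rw [hrs] at hmem hc ⊢
    simp only [Fin.card_Icc] at hc
    simp only [Finset.mem_Icc, Fin.le_def] at hmem ⊢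
    have hs := s.isLt
    have hij' : (i : ℕ) < j := hij
    omega
  · rw [card_tuples_eq_prod, Nat.cast_prod]
    refine Finset.prod_congr rfl fun p _ => ?_
    rw [card_admissible hk1 hkn, Nat.card_Icc]
    have hp := p.isLt
    have hle : aStat π p ≤ (p : ℕ) + 1 := by
      by_contra h
      have := ((lt_aStat_iff π p ((p : ℕ) + 1)).1 (by omega)).1
      omega
    split_ifs with h
    · omega
    -- `π` increases on `[n - k, p]`, which bounds `a_p` from below
    · have ha : (p : ℕ) - (n - k) < aStat π p := by
        rw [lt_aStat_iff]
        refine ⟨by omega, fun t h1 h2 => ?_⟩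
        rcases lt_or_eq_of_le h2 with h' | h'
        · exact le_of_lt (hinc t p (by omega) h')
        · exact le_of_eq (congrArg π (Fin.ext h'))
      omega
end

section
/- Let n ≥ 2 and let π be a permutation of {1,…,n} with π_2 < π_3 < ⋯ < π_n, and set j = π_1. Then the number IPF_{n−1}(n,π) of (n−1)-interval parking functions with outcome π equals 2^{n−j−1} if j ≠ n, and equals 1 if j = n. -/
/-- The left interval `[0, n-2]`, for `n ≥ 2`. -/
def leftInterval (n : ℕ) : Finset (Fin n) := Finset.univ.filter (fun x => (x : ℕ) + 1 < n)

/-- The right interval `[1, n-1]`, for `n ≥ 2`. -/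
def rightInterval (n : ℕ) : Finset (Fin n) := Finset.univ.filter (fun x => 1 ≤ (x : ℕ))

theorem interval_classification (n : ℕ) (hn : 2 ≤ n) (D : Finset (Fin n)) :
    ((∃ r s : Fin n, D = Finset.Icc r s) ∧ D.card = n - 1) ↔
      D = leftInterval n ∨ D = rightInterval n := by
  have hL : leftInterval n = Finset.Icc (⟨0, by omega⟩ : Fin n) ⟨n - 2, by omega⟩ := by
    ext x
    simp only [leftInterval, Finset.mem_filter, Finset.mem_univ, true_and, Finset.mem_Icc,
      Fin.le_def]
    omega
  have hR : rightInterval n = Finset.Icc (⟨1, by omega⟩ : Fin n) ⟨n - 1, by omega⟩ := by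
    ext x
    simp only [rightInterval, Finset.mem_filter, Finset.mem_univ, true_and, Finset.mem_Icc,
      Fin.le_def]
    omega
  constructor
  · rintro ⟨⟨r, s, rfl⟩, hc⟩
    rw [Fin.card_Icc] at hc
    have hr := r.isLt
    have hs := s.isLt
    have hcases : ((r : ℕ) = 0 ∧ (s : ℕ) = n - 2) ∨ ((r : ℕ) = 1 ∧ (s : ℕ) = n - 1) := by omega
    rcases hcases with ⟨h1, h2⟩ | ⟨h1, h2⟩
    · left
      rw [hL]
      congr 1 <;> exact Fin.ext (by assumption)
    · right
      rw [hR]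
      congr 1 <;> exact Fin.ext (by assumption)
  · rintro (rfl | rfl)
    · refine ⟨⟨_, _, hL⟩, ?_⟩
      rw [hL, Fin.card_Icc]
      simp only
      omega
    · refine ⟨⟨_, _, hR⟩, ?_⟩
      rw [hR, Fin.card_Icc]
      simp only
      omega

theorem leftInterval_ne_rightInterval (n : ℕ) (hn : 2 ≤ n) :
    leftInterval n ≠ rightInterval n := by
  intro h
  have h0 : (⟨0, by omega⟩ : Fin n) ∈ leftInterval n := by
    simp only [leftInterval, Finset.mem_filter, Finset.mem_univ, true_and]
    omega
  rw [h] at h0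
  simp [rightInterval] at h0

/-- The admissible sets for car `i`, when car `j` is the one in spot `0`. -/
def choices (n : ℕ) (j i : Fin n) : Finset (Finset (Fin n)) :=
  if i = j then {leftInterval n}
  else if j < i ∧ (i : ℕ) + 1 < n then {leftInterval n, rightInterval n}
  else {rightInterval n}

theorem card_choices (n : ℕ) (hn : 2 ≤ n) (j i : Fin n) :
    (choices n j i).card = if j < i ∧ (i : ℕ) + 1 < n then 2 else 1 := by
  unfold choices
  by_cases h : i = j
  · subst h
    simp
  · by_cases h2 : j < i ∧ (i : ℕ) + 1 < n
    · rw [if_neg h, if_pos h2, if_pos h2,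
        Finset.card_pair (leftInterval_ne_rightInterval n hn)]
    · rw [if_neg h, if_neg h2, if_neg h2, Finset.card_singleton]

/-- The condition on a single car's set, written in terms of the spot `p` of the car `π p`;
`z` is the first spot. -/
theorem admissible_iff (n : ℕ) (hn : 2 ≤ n) (π : Equiv.Perm (Fin n))
    (hπ : ∀ i j : Fin n, 1 ≤ (i : ℕ) → i < j → π i < π j) (z : Fin n) (hz : (z : ℕ) = 0)
    (p : Fin n) (D : Finset (Fin n)) :
    (((∃ r s : Fin n, D = Finset.Icc r s) ∧ D.card = n - 1) ∧
      (p ∈ D ∧ ∀ q ∈ D, q < p → π q < π p)) ↔ D ∈ choices n (π z) (π p) := by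
  rw [interval_classification n hn]
  have hp := p.isLt
  -- Right of spot 0, the last spot holds the largest car as soon as that car is not in spot 0.
  have hlast : π z < π p → ((p : ℕ) + 1 < n ↔ ((π p : Fin n) : ℕ) + 1 < n) := by
    intro hlt
    have hp0 : 1 ≤ (p : ℕ) := by
      by_contra hcon
      have : p = z := Fin.ext (by simp only [hz]; omega)
      rw [this] at hlt
      exact lt_irrefl _ hlt
    constructor
    · intro h
      have h1 := hπ p ⟨n - 1, by omega⟩ hp0 (by rw [Fin.lt_def]; simp only; omega)
      have h2 := (π ⟨n - 1, by omega⟩).isLt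
      rw [Fin.lt_def] at h1
      omega
    · intro h
      by_contra hcon
      set t : Fin n := ⟨n - 1, by omega⟩ with ht
      have hne : π.symm t ≠ p := by
        intro he
        rw [← he, Equiv.apply_symm_apply] at h
        simp only [ht] at h
        omega
      have hlt2 : π.symm t < p := by
        have := (π.symm t).isLt
        have h3 : ((π.symm t : Fin n) : ℕ) ≠ p := fun e => hne (Fin.ext e)
        rw [Fin.lt_def]
        omega
      have h4 : t < π p := by
        by_cases h0 : 1 ≤ ((π.symm t : Fin n) : ℕ)
        · simpa using hπ _ _ h0 hlt2
        · have : π.symm t = z := Fin.ext (by simp only [hz]; omega)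
          rwa [← this, Equiv.apply_symm_apply] at hlt
      have := (π p).isLt
      rw [Fin.lt_def] at h4
      simp only [ht] at h4
      omega
  have hmemL : ∀ x : Fin n, x ∈ leftInterval n ↔ (x : ℕ) + 1 < n := by simp [leftInterval]
  have hmemR : ∀ x : Fin n, x ∈ rightInterval n ↔ 1 ≤ (x : ℕ) := by simp [rightInterval]
  have hne := leftInterval_ne_rightInterval n hn
  have hR : (p ∈ rightInterval n ∧ ∀ q ∈ rightInterval n, q < p → π q < π p) ↔ p ≠ z := by
    rw [hmemR, Ne, Fin.ext_iff]
    constructor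
    · rintro ⟨h, -⟩
      simp only [hz]
      omega
    · intro h
      simp only [hz] at h
      exact ⟨by omega, fun q hq hqp => hπ q p ((hmemR q).1 hq) hqp⟩
  have hL : (p ∈ leftInterval n ∧ ∀ q ∈ leftInterval n, q < p → π q < π p) ↔
      (p = z ∨ (π z < π p ∧ ((π p : Fin n) : ℕ) + 1 < n)) := by
    rw [hmemL]
    constructor
    · rintro ⟨h, hq⟩
      by_cases h0 : p = z
      · exact Or.inl h0
      · have h1 : z < p := by
          rw [Fin.ext_iff] at h0
          rw [Fin.lt_def]
          simp only [hz] at h0 ⊢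
          omega
        have h2 := hq z ((hmemL z).2 (by simp only [hz]; omega)) h1
        exact Or.inr ⟨h2, (hlast h2).1 h⟩
    · rintro (h | ⟨h1, h2⟩)
      · subst h
        refine ⟨by simp only [hz]; omega, fun q _ hq => ?_⟩
        rw [Fin.lt_def] at hq
        simp only [hz] at hq
        omega
      · refine ⟨(hlast h1).2 h2, fun q _ hqp => ?_⟩
        by_cases h0 : 1 ≤ (q : ℕ)
        · exact hπ q p h0 hqp
        · have : q = z := Fin.ext (by simp only [hz]; omega)
          rwa [this]
  have hinj : π p = π z ↔ p = z := π.injective.eq_iff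
  unfold choices
  constructor
  · rintro ⟨rfl | rfl, h⟩
    · rcases hL.1 h with h | h
      · simp [h]
      · have hpz : π p ≠ π z := fun e => lt_irrefl _ (e ▸ h.1)
        rw [if_neg hpz, if_pos h]
        simp
    · have h1 := hR.1 h
      rw [if_neg (fun e => h1 (hinj.1 e))]
      split_ifs <;> simp
  · intro h
    split_ifs at h with h1 h2
    · rw [Finset.mem_singleton] at h
      subst h
      exact ⟨Or.inl rfl, hL.2 (Or.inl (hinj.1 h1))⟩
    · rw [Finset.mem_insert, Finset.mem_singleton] at h
      rcases h with rfl | rfl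
      · exact ⟨Or.inl rfl, hL.2 (Or.inr h2)⟩
      · exact ⟨Or.inr rfl, hR.2 (fun e => h1 (hinj.2 e))⟩
    · rw [Finset.mem_singleton] at h
      subst h
      exact ⟨Or.inr rfl, hR.2 (fun e => h1 (hinj.2 e))⟩

theorem nsub1_interval_parking_outcome_count (n : ℕ) (hn : 2 ≤ n) (π : Equiv.Perm (Fin n))
    (hπ : ∀ i j : Fin n, 1 ≤ (i : ℕ) → i < j → π i < π j) :
    Nat.card {C : Fin n → Finset (Fin n) //
        (∀ i, (∃ r s : Fin n, C i = Finset.Icc r s) ∧ (C i).card = n - 1) ∧ IsOutcome C π} =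
      if ((π ⟨0, by omega⟩ : Fin n) : ℕ) + 1 = n then 1
      else 2 ^ (n - (((π ⟨0, by omega⟩ : Fin n) : ℕ) + 1) - 1) := by
  set j : Fin n := π ⟨0, by omega⟩ with hj
  have key : ∀ C : Fin n → Finset (Fin n),
      ((∀ i, (∃ r s : Fin n, C i = Finset.Icc r s) ∧ (C i).card = n - 1) ∧ IsOutcome C π) ↔
        C ∈ Fintype.piFinset (choices n j) := by
    intro C
    rw [Fintype.mem_piFinset, IsOutcome, ← forall_and]
    refine forall_congr' fun i => ?_
    have h := admissible_iff n hn π hπ ⟨0, by omega⟩ rfl (π.symm i) (C i)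
    rw [Equiv.apply_symm_apply] at h
    rw [← h]
    have hq : ∀ q : Fin n, (∃ i' : Fin n, i' < i ∧ π.symm i' = q) ↔ π q < i := by
      intro q
      constructor
      · rintro ⟨i', h1, rfl⟩
        simpa using h1
      · intro h1
        exact ⟨π q, h1, by simp⟩
    simp only [hq]
  rw [Nat.card_congr (Equiv.subtypeEquivRight key), Nat.card_eq_fintype_card,
    Fintype.card_coe, Fintype.card_piFinset]
  simp only [card_choices n hn]
  rw [Finset.prod_ite, Finset.prod_const, Finset.prod_const_one, mul_one]
  have hset : (Finset.univ.filter fun i : Fin n => j < i ∧ (i : ℕ) + 1 < n) =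
      Finset.Ioo j ⟨n - 1, by omega⟩ := by
    ext i
    simp only [Finset.mem_filter, Finset.mem_univ, true_and, Finset.mem_Ioo, Fin.lt_def]
    omega
  rw [hset, Fin.card_Ioo]
  simp only
  have hjlt := j.isLt
  split_ifs with h
  · have : n - 1 - (j : ℕ) - 1 = 0 := by omega
    rw [this, pow_zero]
  · congr 1
    omega
end

section
/- For every integer n ≥ 2, the total number IPF_{n−1}(n) of (n−1)-interval parking functions of size n equals 2^{n−1}. -/
/-- The two intervals of size `m` in `Fin (m + 1)`: `true` stands for the interval `L` without
the last spot, `false` for the interval `R` without spot `0`. -/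
def spots (m : ℕ) (b : Bool) : Finset (Fin (m + 1)) :=
  if b then Finset.univ.erase (Fin.last m) else Finset.univ.erase 0

lemma mem_spots_true {m : ℕ} {j : Fin (m + 1)} : j ∈ spots m true ↔ j ≠ Fin.last m := by
  simp [spots]

lemma mem_spots_false {m : ℕ} {j : Fin (m + 1)} : j ∈ spots m false ↔ j ≠ 0 := by
  simp [spots]

lemma zero_ne_last {m : ℕ} (hm : 1 ≤ m) : (0 : Fin (m + 1)) ≠ Fin.last m := by
  intro h
  have := congrArg Fin.val h
  simp at this
  omega

lemma spots_injective {m : ℕ} (hm : 1 ≤ m) : Function.Injective (spots m) := by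
  have key : spots m true ≠ spots m false := fun h => by
    have h0 : (0 : Fin (m + 1)) ∈ spots m true := mem_spots_true.2 (zero_ne_last hm)
    rw [h] at h0
    exact mem_spots_false.1 h0 rfl
  intro a b h
  cases a <;> cases b
  · rfl
  · exact absurd h.symm key
  · exact absurd h key
  · rfl

lemma card_spots (m : ℕ) (b : Bool) : (spots m b).card = m := by
  cases b <;> simp [spots]

lemma spots_eq_Icc {m : ℕ} (hm : 1 ≤ m) (b : Bool) :
    ∃ r s : Fin (m + 1), spots m b = Finset.Icc r s := by
  cases b
  · refine ⟨⟨1, by omega⟩, Fin.last m, ?_⟩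
    ext j
    rw [mem_spots_false, Finset.mem_Icc, Fin.le_def, Fin.le_def, Ne, Fin.ext_iff, Fin.val_zero,
      Fin.val_last]
    have := j.isLt
    change ¬ (j : ℕ) = 0 ↔ 1 ≤ (j : ℕ) ∧ (j : ℕ) ≤ m
    omega
  · refine ⟨0, ⟨m - 1, by omega⟩, ?_⟩
    ext j
    rw [mem_spots_true, Finset.mem_Icc, Fin.le_def, Fin.le_def, Ne, Fin.ext_iff]
    have := j.isLt
    simp
    omega

lemma exists_spots_eq {m : ℕ} (hm : 1 ≤ m) (A : Finset (Fin (m + 1)))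
    (hA : ∃ r s : Fin (m + 1), A = Finset.Icc r s) (hc : A.card = m) :
    ∃ b, A = spots m b := by
  obtain ⟨r, s, rfl⟩ := hA
  rw [Fin.card_Icc] at hc
  have hr := r.isLt
  have hs := s.isLt
  by_cases h0 : (r : ℕ) = 0
  · refine ⟨true, ?_⟩
    ext j
    rw [mem_spots_true, Finset.mem_Icc, Fin.le_def, Fin.le_def, Ne, Fin.ext_iff]
    have := j.isLt
    simp
    omega
  · refine ⟨false, ?_⟩
    ext j
    rw [mem_spots_false, Finset.mem_Icc, Fin.le_def, Fin.le_def, Ne, Fin.ext_iff, Fin.val_zero]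
    have := j.isLt
    omega

lemma last_of_isOutcome {m : ℕ} (b : Fin (m + 1) → Bool)
    (π : Equiv.Perm (Fin (m + 1))) (h : IsOutcome (fun i => spots m (b i)) π) :
    b (Fin.last m) = true ↔ ∀ i : Fin m, b i.castSucc = false := by
  constructor
  · intro hl i
    by_contra hi
    rw [Bool.not_eq_false] at hi
    -- `c` is the car in the last spot; it is an `R`-car other than the last car.
    set c := π (Fin.last m) with hc
    have hcs : π.symm c = Fin.last m := by simp [hc]
    have hbc : b c = false := by
      by_contra hb
      rw [Bool.not_eq_false] at hb
      have := (h c).1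
      simp only [hb] at this
      exact mem_spots_true.1 this hcs
    have hp := (h (Fin.last m)).1
    simp only [hl] at hp
    rw [mem_spots_true] at hp
    -- The last car cannot be earlier than `c`, so it must have parked in spot `0`.
    have hp0 : π.symm (Fin.last m) = 0 := by
      by_contra hne
      obtain ⟨i', hi', he⟩ := (h c).2 (π.symm (Fin.last m))
        (by simp only [hbc]; exact mem_spots_false.2 hne)
        (by rw [hcs]; exact lt_of_le_of_ne (Fin.le_last _) hp)
      rw [π.symm.injective he] at hi'
      exact absurd (Fin.le_last c) (not_le.2 hi')
    have hne : π.symm i.castSucc ≠ 0 := by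
      rw [← hp0]
      exact fun he => (Fin.castSucc_lt_last i).ne (π.symm.injective he)
    -- But the earlier `L`-car `i` would have preferred spot `0`.
    obtain ⟨i', hi', he⟩ := (h i.castSucc).2 0
      (by simp only [hi]; rw [← hp0]; exact mem_spots_true.2 hp)
      (Fin.pos_iff_ne_zero.2 hne)
    rw [π.symm.injective (he.trans hp0.symm)] at hi'
    exact absurd (Fin.le_last _) (not_le.2 hi')
  · intro hR
    by_contra hl
    rw [Bool.not_eq_true] at hl
    have hall : ∀ i, b i = false := fun i => by
      induction i using Fin.lastCases with
      | last => exact hl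
      | cast i => exact hR i
    have := (h (π 0)).1
    simp only [hall] at this
    exact mem_spots_false.1 this (by simp)

lemma exists_isOutcome {m : ℕ} (hm : 1 ≤ m) (b : Fin (m + 1) → Bool)
    (hb : b (Fin.last m) = true ↔ ∀ i : Fin m, b i.castSucc = false) :
    ∃ π, IsOutcome (fun i => spots m (b i)) π := by
  have hex : ∃ i, b i = true := by
    by_contra hno
    push Not at hno
    simp only [ne_eq, Bool.not_eq_true] at hno
    have := hb.2 fun i => hno _
    simp [hno] at this
  obtain ⟨l, hl, hmin⟩ := WellFounded.has_min (wellFounded_lt (α := Fin (m + 1)))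
    {i | b i = true} hex
  have hbefore : ∀ i < l, b i = false := fun i hi => by
    by_contra hbi
    exact hmin i (by simpa using hbi) hi
  have hlast : l < Fin.last m → b (Fin.last m) = false := fun hlt => by
    by_contra hbl
    have := hb.1 (by simpa using hbl) (l.castPred hlt.ne)
    rw [Fin.castSucc_castPred] at this
    exact absurd hl (by simp [this])
  -- The spot of each car under `Fin.cycleRange l`.
  have hlow : ∀ i < l, (l.cycleRange i : ℕ) = i + 1 := fun i hi => Fin.coe_cycleRange_of_lt hi
  have heq : l.cycleRange l = 0 := Fin.cycleRange_self l
  have hhigh : ∀ i, l < i → l.cycleRange i = i := fun i hi => Fin.cycleRange_of_gt hi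
  refine ⟨l.cycleRange.symm, fun i => ?_⟩
  rw [Equiv.symm_symm]
  have hocc : ∀ j : Fin (m + 1), (∀ i', i ≤ i' → l.cycleRange i' ≠ j) →
      ∃ i' : Fin (m + 1), i' < i ∧ l.cycleRange i' = j := fun j hj =>
    ⟨l.cycleRange.symm j, by
      by_contra hlt
      exact hj _ (not_lt.1 hlt) (by simp), by simp⟩
  rcases lt_trichotomy i l with hil | rfl | hil
  · simp only [hbefore i hil, mem_spots_false]
    refine ⟨fun h0 => ?_, fun j hj hji => hocc j fun i' hi' he => ?_⟩
    · have := hlow i hil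
      rw [h0] at this
      simp at this
    · subst he
      rw [Fin.lt_def, hlow i hil] at hji
      rw [Fin.le_def] at hi'
      rcases lt_trichotomy i' l with h | rfl | h
      · rw [hlow i' h] at hji
        omega
      · exact hj heq
      · rw [hhigh i' h] at hji
        rw [Fin.lt_def] at hil h
        omega
  · simp only [show b i = true from hl, heq, mem_spots_true]
    exact ⟨zero_ne_last hm, fun j _ hj => absurd hj (Fin.not_lt_zero j)⟩
  · rw [hhigh i hil]
    refine ⟨?_, fun j _ hji => hocc j fun i' hi' he => ?_⟩
    · change i ∈ spots m (b i)
      cases hbi : b i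
      · exact mem_spots_false.2 (Fin.pos_iff_ne_zero.1 (lt_of_le_of_lt (Fin.zero_le l) hil))
      · refine mem_spots_true.2 fun h => ?_
        subst h
        rw [hlast hil] at hbi
        cases hbi
    · rw [hhigh i' (hil.trans_le hi')] at he
      subst he
      exact absurd hi' (not_le.2 hji)

/-- The word of length `m + 1` that extends `g` by the only letter for which parking succeeds. -/
def extendWord {m : ℕ} (g : Fin m → Bool) : Fin (m + 1) → Bool :=
  Fin.snoc (α := fun _ => Bool) g (decide (∀ i, g i = false))

lemma extendWord_castSucc {m : ℕ} (g : Fin m → Bool) (i : Fin m) :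
    extendWord g i.castSucc = g i := by
  simp [extendWord]

lemma extendWord_last {m : ℕ} (g : Fin m → Bool) :
    extendWord g (Fin.last m) = true ↔ ∀ i : Fin m, extendWord g i.castSucc = false := by
  simp [extendWord]

theorem nsub1_interval_parking_count (n : ℕ) (hn : 2 ≤ n) :
    Nat.card {C : Fin n → Finset (Fin n) //
        (∀ i, (∃ r s : Fin n, C i = Finset.Icc r s) ∧ (C i).card = n - 1) ∧
          ∃ π : Equiv.Perm (Fin n), IsOutcome C π} =
      2 ^ (n - 1) := by
  obtain ⟨m, rfl⟩ : ∃ m, n = m + 1 := ⟨n - 1, by omega⟩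
  have hm : 1 ≤ m := by omega
  rw [Nat.add_sub_cancel]
  let F : (Fin m → Bool) → {C : Fin (m + 1) → Finset (Fin (m + 1)) //
      (∀ i, (∃ r s : Fin (m + 1), C i = Finset.Icc r s) ∧ (C i).card = m) ∧
        ∃ π : Equiv.Perm (Fin (m + 1)), IsOutcome C π} := fun g =>
    ⟨fun i => spots m (extendWord g i),
      fun i => ⟨spots_eq_Icc hm _, card_spots m _⟩,
      exists_isOutcome hm _ (extendWord_last g)⟩
  have hF : Function.Bijective F := by
    constructor
    · intro g g' h
      funext i
      have := spots_injective hm (congrFun (congrArg Subtype.val h) i.castSucc)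
      simpa only [extendWord_castSucc] using this
    · rintro ⟨C, hC, π, hπ⟩
      choose b hb using fun i => exists_spots_eq hm (C i) (hC i).1 (hC i).2
      obtain rfl : C = fun i => spots m (b i) := funext hb
      refine ⟨fun i => b i.castSucc, Subtype.ext (funext fun i => congrArg (spots m) ?_)⟩
      induction i using Fin.lastCases with
      | last =>
        rw [Bool.eq_iff_iff, extendWord_last, last_of_isOutcome b π hπ]
        simp only [extendWord_castSucc]
      | cast i => exact extendWord_castSucc _ i
  rw [← Nat.card_congr (Equiv.ofBijective F hF)]
  simp
end

section
/- Let n ≥ 2 and let π be a permutation of {1,…,n} with π_{n−1} < π_n. Then the number IPF_2(n,π) of 2-interval parking functions with outcome π equals 2^{asc(π)−1}, where asc(π) is the number of indices i with 2 ≤ i ≤ n and π_{i−1} < π_i. -/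
open Finset in
/-- The number of ascents of `π` ending at position `j`, which is `0` or `1`. -/
def ascAt {n : ℕ} (π : Equiv.Perm (Fin n)) (j : Fin n) : ℕ :=
  #{k : Fin n | (k : ℕ) + 1 = j ∧ π k < π j}

open Finset in
/-- The acceptable sets allowed for the car parked in spot `j`. -/
def allowed {n : ℕ} (π : Equiv.Perm (Fin n)) (j : Fin n) : Set (Finset (Fin n)) :=
  {S | ((∃ r s : Fin n, S = Finset.Icc r s) ∧ #S = 2) ∧ j ∈ S ∧ ∀ k ∈ S, k < j → π k < π j}

lemma ascNum_eq_sum {n : ℕ} (π : Equiv.Perm (Fin n)) : ascNum π = ∑ j, ascAt π j := by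
  simp only [ascNum, ascAt, Finset.card_filter]
  rw [Fintype.sum_prod_type_right]

lemma ascAt_le_one {n : ℕ} (π : Equiv.Perm (Fin n)) (j : Fin n) : ascAt π j ≤ 1 := by
  rw [ascAt, Finset.card_le_one]
  intro a ha b hb
  simp only [Finset.mem_filter, Finset.mem_univ, true_and] at ha hb
  ext; omega

lemma ascAt_eq_one {n : ℕ} (π : Equiv.Perm (Fin n)) (j k : Fin n) (h : (k : ℕ) + 1 = j)
    (hk : π k < π j) : ascAt π j = 1 := by
  refine le_antisymm (ascAt_le_one π j) (Finset.card_pos.2 ⟨k, ?_⟩)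
  simp [h, hk]

lemma Icc_eq_pair {n : ℕ} {r s : Fin n} (h : (s : ℕ) = r + 1) : Finset.Icc r s = {r, s} := by
  ext x
  simp only [Finset.mem_Icc, Finset.mem_insert, Finset.mem_singleton, Fin.le_def, Fin.ext_iff]
  omega

open Finset in
lemma allowed_eq {n : ℕ} (π : Equiv.Perm (Fin n)) (j : Fin n) :
    allowed π j = Set.image (fun k : Fin n => ({j, k} : Finset (Fin n)))
      {k : Fin n | (k : ℕ) = j + 1 ∨ ((k : ℕ) + 1 = j ∧ π k < π j)} := by
  ext S
  simp only [allowed, Set.mem_ofPred_eq, Set.mem_image]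
  constructor
  · rintro ⟨⟨⟨r, s, rfl⟩, hc⟩, hj, hlt⟩
    have hrs : (s : ℕ) = r + 1 := by
      rw [Fin.card_Icc] at hc; omega
    rw [Icc_eq_pair hrs] at hj hlt ⊢
    simp only [Finset.mem_insert, Finset.mem_singleton] at hj
    rcases hj with rfl | rfl
    · exact ⟨s, Or.inl hrs, rfl⟩
    · refine ⟨r, Or.inr ⟨hrs.symm, hlt r (by simp) ?_⟩, Finset.pair_comm _ _⟩
      rw [Fin.lt_def]; omega
  · rintro ⟨k, hk | ⟨hk, hπ⟩, rfl⟩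
    · have hne : j ≠ k := by rw [Ne, Fin.ext_iff]; omega
      refine ⟨⟨⟨j, k, (Icc_eq_pair hk).symm⟩, Finset.card_pair hne⟩, by simp, ?_⟩
      intro x hx hxj
      simp only [Finset.mem_insert, Finset.mem_singleton] at hx
      rw [Fin.lt_def] at hxj
      rcases hx with rfl | rfl <;> omega
    · have hne : j ≠ k := by rw [Ne, Fin.ext_iff]; omega
      refine ⟨⟨⟨k, j, ?_⟩, Finset.card_pair hne⟩, by simp, ?_⟩
      · rw [Icc_eq_pair hk.symm, Finset.pair_comm]
      intro x hx hxj
      simp only [Finset.mem_insert, Finset.mem_singleton] at hx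
      rcases hx with rfl | rfl
      · exact absurd hxj (lt_irrefl _)
      · exact hπ

lemma card_allowed {n : ℕ} (π : Equiv.Perm (Fin n)) (j : Fin n) :
    Nat.card (allowed π j) = (if (j : ℕ) + 1 < n then 1 else 0) + ascAt π j := by
  classical
  rw [allowed_eq, Nat.card_image_of_injOn]
  · rw [← Finset.coe_filter_univ, Nat.card_coe_set_eq, Set.ncard_coe_finset,
      Finset.filter_or, Finset.card_union_of_disjoint, ascAt]
    · congr 1
      split_ifs with h
      · rw [Finset.card_eq_one]
        refine ⟨⟨j + 1, h⟩, ?_⟩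
        ext x
        simp [Fin.ext_iff]
      · rw [Finset.card_eq_zero, Finset.filter_eq_empty_iff]
        intro x _ hx
        omega
    · rw [Finset.disjoint_filter]
      intro x _ h1 h2
      omega
  · intro a ha b hb hab
    have hne : a ≠ j := by
      rintro rfl
      rcases ha with h | h <;> omega
    have : a ∈ ({j, b} : Finset (Fin n)) := by
      rw [← show ({j, a} : Finset (Fin n)) = {j, b} from hab]; simp
    simpa [hne] using this

/-- The constraints on the individual acceptable sets are independent of each other. -/
lemma card_eq_prod {n : ℕ} (π : Equiv.Perm (Fin n)) :
    Nat.card {C : Fin n → Finset (Fin n) //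
        (∀ i, (∃ r s : Fin n, C i = Finset.Icc r s) ∧ (C i).card = 2) ∧ IsOutcome C π} =
      ∏ j, Nat.card (allowed π j) := by
  have key : ∀ C : Fin n → Finset (Fin n),
      ((∀ i, (∃ r s : Fin n, C i = Finset.Icc r s) ∧ (C i).card = 2) ∧ IsOutcome C π) ↔
        ∀ i, C i ∈ allowed π (π.symm i) := by
    intro C
    rw [IsOutcome, ← forall_and]
    refine forall_congr' fun i => and_congr_right fun _ => and_congr_right fun _ => ?_
    refine forall_congr' fun j => imp_congr_right fun _ => imp_congr_right fun _ => ?_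
    rw [Equiv.apply_symm_apply]
    constructor
    · rintro ⟨i', hi', rfl⟩
      simpa using hi'
    · intro h
      exact ⟨π j, h, by simp⟩
  rw [Nat.card_congr ((Equiv.subtypeEquivRight key).trans Equiv.subtypePiEquivPi), Nat.card_pi]
  exact Equiv.prod_comp π.symm (fun j => Nat.card (allowed π j))

theorem two_interval_parking_outcome_count (n : ℕ) (hn : 2 ≤ n) (π : Equiv.Perm (Fin n))
    (hπ : π ⟨n - 2, by omega⟩ < π ⟨n - 1, by omega⟩) :
    Nat.card {C : Fin n → Finset (Fin n) //
        (∀ i, (∃ r s : Fin n, C i = Finset.Icc r s) ∧ (C i).card = 2) ∧ IsOutcome C π} =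
      2 ^ (ascNum π - 1) := by
  obtain ⟨m, rfl⟩ : ∃ m, n = m + 1 := ⟨n - 1, by omega⟩
  have hlast : ascAt π (Fin.last m) = 1 :=
    ascAt_eq_one π _ _ (by simp only [Fin.val_last]; omega) hπ
  rw [card_eq_prod, ascNum_eq_sum, Fin.prod_univ_castSucc, Fin.sum_univ_castSucc, hlast,
    Nat.add_sub_cancel, ← Finset.prod_pow_eq_pow_sum]
  simp only [card_allowed, hlast, Fin.val_last, lt_irrefl, if_false, zero_add, mul_one]
  refine Finset.prod_congr rfl fun j _ => ?_
  rw [if_pos (by simp)]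
  have := ascAt_le_one π j.castSucc
  interval_cases ascAt π j.castSucc <;> rfl
end

section
/- For every integer n ≥ 1 and every permutation π of {1,…,n}, the number PF(n,π) of classical parking functions of size n with outcome π equals the product over i from 1 to n of a_i(π). -/
/-- The car that parks in spot `p` has exactly `aStat π p` admissible preferences `x`; the bijection
sends `x` to its distance `p - x` from the spot. -/
theorem card_preferences {n : ℕ} (π : Equiv.Perm (Fin n)) (p : Fin n) :
    Nat.card {x : Fin n // x ≤ p ∧ ∀ j, x ≤ j → j < p → ∃ i' : Fin n, i' < π p ∧ π.symm i' = j} =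
      aStat π p := by
  classical
  rw [Nat.card_eq_fintype_card, Fintype.card_subtype, aStat]
  refine Finset.card_bij' (fun x _ => (p : ℕ) - x) (fun m _ => ⟨(p : ℕ) - m, by omega⟩) ?_ ?_ ?_ ?_
  · intro x hx
    simp only [Finset.mem_filter, Finset.mem_univ, true_and, Finset.mem_range] at hx ⊢
    obtain ⟨hxp, hx⟩ := hx
    have hxp' : (x : ℕ) ≤ p := hxp
    refine ⟨by omega, fun t h1 h2 => ?_⟩
    rcases (show t ≤ p from h2).eq_or_lt with rfl | h
    · exact le_rfl
    · obtain ⟨i', hi, rfl⟩ := hx t (Fin.le_def.2 (by omega)) h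
      simpa using hi.le
  · intro m hm
    simp only [Finset.mem_filter, Finset.mem_univ, true_and, Finset.mem_range] at hm ⊢
    obtain ⟨-, hm⟩ := hm
    refine ⟨Fin.le_def.2 (Nat.sub_le _ _), fun j h1 h2 => ⟨π j, ?_, by simp⟩⟩
    exact lt_of_le_of_ne (hm j h1 h2.le) fun h => h2.ne (π.injective h)
  · intro x hx
    simp only [Finset.mem_filter, Finset.mem_univ, true_and] at hx
    have hxp : (x : ℕ) ≤ p := hx.1
    ext
    simp only
    omega
  · intro m hm
    simp only [Finset.mem_filter, Finset.mem_range] at hm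
    simp only
    omega

theorem classical_parking_outcome_count (n : ℕ) (hn : 1 ≤ n) (π : Equiv.Perm (Fin n)) :
    Nat.card {c : Fin n → Fin n // IsOutcome (fun i => Finset.Ici (c i)) π} =
      ∏ i : Fin n, aStat π i := by
  have e : {c : Fin n → Fin n // IsOutcome (fun i => Finset.Ici (c i)) π} ≃
      ∀ i : Fin n, {x : Fin n // x ≤ π.symm i ∧
        ∀ j, x ≤ j → j < π.symm i → ∃ i' : Fin n, i' < i ∧ π.symm i' = j} :=
    (Equiv.subtypeEquivRight fun c => by simp only [IsOutcome, Finset.mem_Ici]).trans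
      Equiv.subtypePiEquivPi
  rw [Nat.card_congr e, Nat.card_pi, ← Equiv.prod_comp π]
  refine Finset.prod_congr rfl fun p _ => ?_
  simpa only [Equiv.symm_apply_apply] using card_preferences π p
end
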